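/- Let S_p = (S, I, O, G, D, h) be a (possibly partial) deterministic TFSM with output delays having only point intervals. If S_p has a homing sequence, then S_p has a homing sequence of length at most 2^(T(T−1)/2 + 1), where T = |S|·(1 + Σ_{j=1}^{K} N^j), N = |O|·|D|·|G|, and K = ⌈max(D)/min(G)⌉, with min(G) the smallest u with [u,u] ∈ G. -/

import Mathlib

/-!
A homing sequence is in particular defined at every state (compare a state with itself), so the
point guards force all its timestamps: it is `timed 0 w` for a word `w` of pairs (input, guard
value), and `w` is read along one path of transitions from each state.

Along a path, measure output times relative to the end of the path (`relOut`). After a prefix of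
the word, the relative outputs split into those at times `≤ 0`, already emitted, and the pending
ones at times `> 0`. Since `max D ≤ K * min G`, the pending outputs depend only on the last `K`
transitions. To a prefix of length at least `K` attach its configuration: for each initial state,
the current state and the outputs, delays and guard values of the last `K` transitions, together
with the relation "same emitted outputs" between initial states. There are at most
`(n * N ^ K) ^ n * 2 ^ (n * n)` configurations, where `n = |S|`.

If two prefixes of a homing word have the same configuration, the factor between them can be
deleted (`WordHoming.cut`): equal outputs after the deletion give equal emitted outputs at the
cut and equal pending and later outputs, hence equal outputs for the whole original word. So a
shortest homing word has length less than `K + (n * N ^ K) ^ n * 2 ^ (n * n)`, which is at most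
`2 ^ (T * (T - 1) / 2 + 1)` because `T ≥ n + n * N ^ K` and `T ≥ 1 + K`.
-/

/-- A timed guard: an interval with natural-number endpoints, left-closed, and
either right-open (`rightClosed = false`, i.e. `[lo, hi)`) or right-closed
(`rightClosed = true`, i.e. `[lo, hi]`; point intervals are `[u,u]`). -/
structure Guard where
  lo : ℕ
  hi : ℕ
  rightClosed : Bool
deriving DecidableEq

/-- Membership of a timestamp in a guard. -/
def GuardMem (g : Guard) (t : ℝ) : Prop :=
  (g.lo : ℝ) ≤ t ∧ (if g.rightClosed then t ≤ (g.hi : ℝ) else t < (g.hi : ℝ))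

/-- Guard inclusion (as sets of timestamps). -/
def GuardSub (g g' : Guard) : Prop := ∀ t : ℝ, GuardMem g t → GuardMem g' t

/-- A transition of a TFSM with output delays: source state, input, timed guard,
output, positive integer output delay, destination state. -/
structure TTrans (S I O : Type) where
  src : S
  inp : I
  guard : Guard
  out : O
  delay : ℕ+
  dst : S

/-- A TFSM with output delays over states `S`, inputs `I`, outputs `O`,
given by its transition relation. -/
abbrev TFSM (S I O : Type) := Set (TTrans S I O)

variable {S I O A B : Type}

/-- Determinism: any two distinct transitions from the same state on the same input
have disjoint guards. -/
def TFSMDeterministic (M : TFSM S I O) : Prop :=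
  ∀ tr ∈ M, ∀ tr' ∈ M, tr.src = tr'.src → tr.inp = tr'.inp → tr ≠ tr' →
    ∀ t : ℝ, ¬ (GuardMem tr.guard t ∧ GuardMem tr'.guard t)

/-- A timed input sequence: nonnegative, nondecreasing timestamps. -/
def IsTimedInputSeq (α : List (I × ℝ)) : Prop :=
  (∀ p ∈ α, 0 ≤ p.2) ∧ List.Chain' (· ≤ ·) (α.map Prod.snd)

/-- `TRunTo M s t0 α trs sf`: starting at state `s` at time `t0`, the timed input
sequence `α` induces the sequence of transitions `trs`, ending at state `sf`. -/
inductive TRunTo (M : TFSM S I O) : S → ℝ → List (I × ℝ) → List (TTrans S I O) → S → Prop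
  | nil (s : S) (t0 : ℝ) : TRunTo M s t0 [] [] s
  | cons {s sf : S} {t0 t : ℝ} {i : I} {tr : TTrans S I O}
      {rest : List (I × ℝ)} {trs : List (TTrans S I O)} :
      tr ∈ M → tr.src = s → tr.inp = i → GuardMem tr.guard (t - t0) →
      TRunTo M tr.dst t rest trs sf →
      TRunTo M s t0 ((i, t) :: rest) (tr :: trs) sf

/-- `α` induces the sequence of transitions `trs` from state `s`. -/
def TInduces (M : TFSM S I O) (s : S) (α : List (I × ℝ)) (trs : List (TTrans S I O)) : Prop :=
  ∃ sf : S, TRunTo M s 0 α trs sf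

/-- `Dom(s)`: the timed input sequences inducing at least one sequence of transitions from `s`. -/
def TDom (M : TFSM S I O) (s : S) : Set (List (I × ℝ)) :=
  { α | IsTimedInputSeq α ∧ ∃ trs, TInduces M s α trs }

/-- `next_state(s, α) = sf` (as a relation, since `next_state` is partial). -/
def TReaches (M : TFSM S I O) (s : S) (α : List (I × ℝ)) (sf : S) : Prop :=
  ∃ trs, TRunTo M s 0 α trs sf

/-- The timed outputs of a run: the `j`-th transition produces its output at time
`t_j + d_j`. -/
def rawOutputs (α : List (I × ℝ)) (trs : List (TTrans S I O)) : List (O × ℝ) :=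
  List.zipWith (fun p tr => (tr.out, p.2 + ((tr.delay : ℕ) : ℝ))) α trs

/-- `timed_out(s, α)`: all time-sorted reorderings of the timed outputs of the run of `α` at `s`. -/
def timedOut (M : TFSM S I O) (s : S) (α : List (I × ℝ)) : Set (List (O × ℝ)) :=
  { β | ∃ trs sf, TRunTo M s 0 α trs sf ∧ List.Perm β (rawOutputs α trs) ∧
        List.Chain' (· ≤ ·) (β.map Prod.snd) }

/-- Homing sequence for a TFSM with output delays. -/
def THoming (M : TFSM S I O) (α : List (I × ℝ)) : Prop :=
  IsTimedInputSeq α ∧ ∀ s1 s2 : S, timedOut M s1 α = timedOut M s2 α →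
    ∃ sf : S, TReaches M s1 α sf ∧ TReaches M s2 α sf

/-- Synchronizing sequence for a TFSM with output delays. -/
def TSync (M : TFSM S I O) (α : List (I × ℝ)) : Prop :=
  IsTimedInputSeq α ∧ ∃ sf : S, ∀ s : S, TReaches M s α sf

/-- A timed input sequence is non-integer if the difference of any two distinct
timestamps is not an integer. -/
def NonInteger (α : List (I × ℝ)) : Prop :=
  ∀ j k : Fin α.length, j ≠ k → ∀ z : ℤ, (α.get j).2 - (α.get k).2 ≠ (z : ℝ)

/-- A transition of an (untimed) FSM. -/
structure FTrans (S A B : Type) where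
  src : S
  inp : A
  out : B
  dst : S

/-- An (untimed) FSM given by its transition relation. -/
abbrev UntimedFSM (S A B : Type) := Set (FTrans S A B)

/-- FSM run: input sequence, produced output sequence, final state. -/
inductive FRunTo (T : UntimedFSM S A B) : S → List A → List B → S → Prop
  | nil (s : S) : FRunTo T s [] [] s
  | cons {s sf : S} {a : A} {rest : List A} {γ : List B} {f : FTrans S A B} :
      f ∈ T → f.src = s → f.inp = a → FRunTo T f.dst rest γ sf →
      FRunTo T s (a :: rest) (f.out :: γ) sf

def FReaches (T : UntimedFSM S A B) (s : S) (β : List A) (sf : S) : Prop :=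
  ∃ γ, FRunTo T s β γ sf

/-- `out(s, β)` for an FSM (a set, i.e. a partial value, since the FSM may be partial). -/
def FOut (T : UntimedFSM S A B) (s : S) (β : List A) : Set (List B) :=
  { γ | ∃ sf, FRunTo T s β γ sf }

def FDeterministic (T : UntimedFSM S A B) : Prop :=
  ∀ f ∈ T, ∀ f' ∈ T, f.src = f'.src → f.inp = f'.inp → f = f'

/-- Completeness of an FSM relative to an input alphabet `A0`. -/
def FCompleteOn (T : UntimedFSM S A B) (A0 : Set A) : Prop :=
  ∀ s : S, ∀ a ∈ A0, ∃ f ∈ T, f.src = s ∧ f.inp = a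

/-- Synchronizing sequence for an FSM. -/
def FSync (T : UntimedFSM S A B) (β : List A) : Prop :=
  ∃ sf : S, ∀ s : S, FReaches T s β sf

/-- Homing sequence for an FSM. -/
def FHoming (T : UntimedFSM S A B) (β : List A) : Prop :=
  ∀ s1 s2 : S, FOut T s1 β = FOut T s2 β →
    ∃ sf : S, FReaches T s1 β sf ∧ FReaches T s2 β sf

/-- The guards appearing on transitions labeled with input `i`. -/
def guardsOf (M : TFSM S I O) (i : I) : Set Guard :=
  { g | ∃ tr ∈ M, tr.inp = i ∧ tr.guard = g }

/-- Boundary points of the guards labeled `i`. -/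
def boundaries (M : TFSM S I O) (i : I) : Set ℕ :=
  { p | ∃ g ∈ guardsOf M i, g.lo = p ∨ g.hi = p }

/-- `Ḡ_i`: the half-open intervals determined by consecutive boundary points of `G_i`. -/
def refinedGuards (M : TFSM S I O) (i : I) : Set Guard :=
  { g | g.rightClosed = false ∧ g.lo ∈ boundaries M i ∧ g.hi ∈ boundaries M i ∧
        g.lo < g.hi ∧ ∀ r ∈ boundaries M i, ¬ (g.lo < r ∧ r < g.hi) }

/-- The abstract input alphabet `I_G = {(i, g) : g ∈ Ḡ_i}`. -/
def absInputs (M : TFSM S I O) : Set (I × Guard) :=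
  { p | p.2 ∈ refinedGuards M p.1 }

/-- The region FSM `R(S)` of a TFSM with output delays. -/
def regionFSM (M : TFSM S I O) : UntimedFSM S (I × Guard) (O × ℕ+) :=
  { f | f.inp ∈ absInputs M ∧ ∃ tr ∈ M, tr.src = f.src ∧ tr.inp = f.inp.1 ∧
        tr.out = f.out.1 ∧ tr.delay = f.out.2 ∧ tr.dst = f.dst ∧ GuardSub f.inp.2 tr.guard }

/-- All guards are half-open intervals `[u, v)` with `u < v`. -/
def HalfOpenGuards (M : TFSM S I O) : Prop :=
  ∀ tr ∈ M, tr.guard.rightClosed = false ∧ tr.guard.lo < tr.guard.hi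

/-- Weak completeness: all states have the same domain. -/
def WeaklyComplete (M : TFSM S I O) : Prop :=
  ∀ s s' : S, TDom M s = TDom M s'

/-- `Projects M t0 α β`: `β` is the untimed projection `[α]_{I_G}` of `α`
(relative to previous timestamp `t0`). -/
inductive Projects (M : TFSM S I O) : ℝ → List (I × ℝ) → List (I × Guard) → Prop
  | nil (t0 : ℝ) : Projects M t0 [] []
  | cons {t0 t : ℝ} {i : I} {g : Guard} {rest : List (I × ℝ)} {brest : List (I × Guard)} :
      g ∈ refinedGuards M i → GuardMem g (t - t0) →
      Projects M t rest brest →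
      Projects M t0 ((i, t) :: rest) ((i, g) :: brest)

/-- All guards are point intervals `[u, u]` with `u` a positive integer. -/
def PointIntervals (M : TFSM S I O) : Prop :=
  ∀ tr ∈ M, tr.guard.rightClosed = true ∧ tr.guard.lo = tr.guard.hi ∧ 0 < tr.guard.lo

/-- The region FSM of a TFSM with only point intervals: abstract inputs are the
(input, guard) pairs appearing on transitions. -/
def pointRegionFSM (M : TFSM S I O) : UntimedFSM S (I × Guard) (O × ℕ+) :=
  { f | ∃ tr ∈ M, tr.src = f.src ∧ (tr.inp, tr.guard) = f.inp ∧
        (tr.out, tr.delay) = f.out ∧ tr.dst = f.dst }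

/-- `t(α)`: the last timestamp of `α` (0 for the empty sequence). -/
def tEnd (α : List (I × ℝ)) : ℝ := (α.map Prod.snd).getLastD 0

/-- The number of timed outputs of the run produced at or after time `t(α)`
(counted with multiplicity). -/
noncomputable def tailCount (α : List (I × ℝ)) (trs : List (TTrans S I O)) : ℕ :=
  ((rawOutputs α trs).filter (fun p => decide (tEnd α ≤ p.2))).length

/-- The timed output tail of a run: the multiset of `(o, τ - t(α))` over timed
outputs `(o, τ)` of the run with `τ ≥ t(α)`. -/
noncomputable def tailOf (α : List (I × ℝ)) (trs : List (TTrans S I O)) : Multiset (O × ℝ) :=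
  ↑(((rawOutputs α trs).filter (fun p => decide (tEnd α ≤ p.2))).map
      (fun p => (p.1, p.2 - tEnd α)))

/-- The set of all timed output tails of the TFSM, together with the empty tail. -/
def Tout (M : TFSM S I O) : Set (Multiset (O × ℝ)) :=
  insert 0 { m | ∃ (s : S) (α : List (I × ℝ)) (trs : List (TTrans S I O)) (sf : S),
    α ∈ TDom M s ∧ TRunTo M s 0 α trs sf ∧ m = tailOf α trs }

/-- The output delay at state `j` of the machine `B_n`. -/
def BnDelay (n : ℕ) (j : Fin n) : ℕ+ :=
  if (j : ℕ) = n - 2 then 3 else if (j : ℕ) = n - 1 then 1 else 2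

/-- The transition of `B_n` out of state `j`. -/
def BnTrans (n : ℕ) [NeZero n] (j : Fin n) : TTrans (Fin n) Unit Unit :=
  ⟨j, (), ⟨1, 1, true⟩, (), BnDelay n j, j + 1⟩

/-- The TFSM `B_n` with only point intervals. -/
def Bn (n : ℕ) [NeZero n] : TFSM (Fin n) Unit Unit := Set.range (BnTrans n)

/-- The bound `2 ^ (T(T−1)/2 + 1)` with `T = |S|·(1 + Σ_{j=1}^{K} N^j)`,
`N = |O|·|D|·|G|` and `K = ⌈max(D)/min(G)⌉`. -/
def hsBound (cS cO : ℕ) (Gset Dset : Finset ℕ) (hG : Gset.Nonempty) (hD : Dset.Nonempty) : ℕ :=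
  let K : ℕ := ⌈((Dset.max' hD : ℚ)) / ((Gset.min' hG : ℚ))⌉₊
  let N : ℕ := cO * Dset.card * Gset.card
  let T : ℕ := cS * (1 + ∑ j ∈ Finset.Icc 1 K, N ^ j)
  2 ^ (T * (T - 1) / 2 + 1)

/-! ### Words and paths -/

/-- `TrPath M s l q`: the transitions in `l` lie in `M` and are consecutive, leading from `s` to
`q`; guards are ignored. -/
def TrPath (M : TFSM S I O) : S → List (TTrans S I O) → S → Prop
  | s, [], q => s = q
  | s, tr :: l, q => tr ∈ M ∧ tr.src = s ∧ TrPath M tr.dst l q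

/-- The letter read by a transition: its input and the left endpoint of its guard, which for a
point interval `[u, u]` is `u`. -/
def lbl (tr : TTrans S I O) : I × ℕ := (tr.inp, tr.guard.lo)

/-- The timed input sequence in which each letter `(i, u)` is the input `i` applied `u` time units
after the previous timestamp, starting from time `t0`. -/
def timed : ℝ → List (I × ℕ) → List (I × ℝ)
  | _, [] => []
  | t0, (i, u) :: w => (i, t0 + u) :: timed (t0 + u) w

/-- The duration of a word. -/
def dur (w : List (I × ℕ)) : ℕ := (w.map Prod.snd).sum

/-- The multiset of timed outputs along a list of transitions, with times measured relative to the
end of the list. -/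
def relOut : List (TTrans S I O) → Multiset (O × ℤ)
  | [] => 0
  | tr :: l => (tr.out, ((tr.delay : ℕ) : ℤ) - dur (l.map lbl)) ::ₘ relOut l

/-- Translation of the times of a multiset of timed outputs. -/
def shift (c : ℤ) (m : Multiset (O × ℤ)) : Multiset (O × ℤ) := m.map fun p => (p.1, p.2 + c)

lemma dur_cons (p : I × ℕ) (w : List (I × ℕ)) : dur (p :: w) = p.2 + dur w := by simp [dur]

/-- The homing property for words: from each state there is a path reading `w`, and paths with
equal outputs have equal ends. -/
def WordHoming (M : TFSM S I O) (w : List (I × ℕ)) : Prop :=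
  ∃ (trs : S → List (TTrans S I O)) (fin : S → S),
    (∀ s, TrPath M s (trs s) (fin s) ∧ (trs s).map lbl = w) ∧
    ∀ s1 s2, relOut (trs s1) = relOut (trs s2) → fin s1 = fin s2

lemma path_append {M : TFSM S I O} {a b : List (TTrans S I O)} {s q : S} :
    TrPath M s (a ++ b) q ↔ ∃ r, TrPath M s a r ∧ TrPath M r b q := by
  induction a generalizing s with
  | nil => simp [TrPath]
  | cons tr a ih =>
    simp only [List.cons_append, TrPath, ih]
    constructor
    · rintro ⟨h1, h2, r, h3, h4⟩; exact ⟨r, ⟨h1, h2, h3⟩, h4⟩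
    · rintro ⟨r, ⟨h1, h2, h3⟩, h4⟩; exact ⟨h1, h2, r, h3, h4⟩

lemma TrPath.mem {M : TFSM S I O} {l : List (TTrans S I O)} {s q : S} (h : TrPath M s l q) :
    ∀ tr ∈ l, tr ∈ M := by
  induction l generalizing s with
  | nil => simp
  | cons tr l ih =>
    obtain ⟨h1, -, h3⟩ := h
    simpa [h1] using ih h3

lemma timed_length (t0 : ℝ) (w : List (I × ℕ)) : (timed t0 w).length = w.length := by
  induction w generalizing t0 with
  | nil => rfl
  | cons p w ih => simp [timed, ih]

lemma timed_injective (t0 : ℝ) : Function.Injective (timed (I := I) t0) := by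
  intro w w' h
  induction w generalizing t0 w' with
  | nil => cases w' <;> simp [timed] at h ⊢
  | cons p w ih =>
    cases w' with
    | nil => simp [timed] at h
    | cons p' w' =>
      obtain ⟨i, u⟩ := p
      obtain ⟨i', u'⟩ := p'
      simp only [timed, List.cons.injEq, Prod.mk.injEq, add_right_inj, Nat.cast_inj] at h
      obtain ⟨⟨rfl, rfl⟩, h⟩ := h
      rw [ih _ h]

lemma timed_le (t0 : ℝ) (w : List (I × ℕ)) : ∀ p ∈ timed t0 w, t0 ≤ p.2 := by
  induction w generalizing t0 with
  | nil => simp [timed]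
  | cons p w ih =>
    intro q hq
    have h0 : (0 : ℝ) ≤ p.2 := Nat.cast_nonneg _
    simp only [timed, List.mem_cons] at hq
    rcases hq with rfl | hq
    · simp
    · linarith [ih _ q hq]

lemma timed_isTimedInputSeq (w : List (I × ℕ)) : IsTimedInputSeq (timed 0 w) := by
  refine ⟨timed_le 0 w, ?_⟩
  generalize (0 : ℝ) = t0
  refine List.IsChain.imp (fun _ _ h => h) (List.Pairwise.isChain ?_)
  induction w generalizing t0 with
  | nil => simp [timed]
  | cons p w ih =>
    simp only [timed, List.map_cons, List.pairwise_cons]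
    refine ⟨fun x hx => ?_, ih _⟩
    obtain ⟨q, hq, rfl⟩ := List.mem_map.1 hx
    exact timed_le _ w q hq

lemma guardMem_iff {M : TFSM S I O} (hpt : PointIntervals M) {tr : TTrans S I O} (h : tr ∈ M)
    (t : ℝ) : GuardMem tr.guard t ↔ t = tr.guard.lo := by
  obtain ⟨h1, h2, -⟩ := hpt tr h
  simp only [GuardMem, h1, if_true, ← h2]
  exact ⟨fun h => le_antisymm h.2 h.1, fun h => ⟨h.ge, h.le⟩⟩

/-- With point guards, a run is a path together with the timestamps its guards dictate. -/
lemma runTo_iff {M : TFSM S I O} (hpt : PointIntervals M) {s q : S} {t0 : ℝ}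
    {α : List (I × ℝ)} {l : List (TTrans S I O)} :
    TRunTo M s t0 α l q ↔ TrPath M s l q ∧ α = timed t0 (l.map lbl) := by
  constructor
  · intro h
    induction h with
    | nil => simp [TrPath, timed]
    | cons h1 h2 h3 h4 h5 ih =>
      rw [guardMem_iff hpt h1] at h4
      have := eq_add_of_sub_eq' h4
      subst this h2 h3
      exact ⟨⟨h1, rfl, ih.1⟩, by simp [timed, lbl, ← ih.2]⟩
  · rintro ⟨h, rfl⟩
    induction l generalizing s t0 with
    | nil => cases h; exact .nil _ _
    | cons tr l ih =>
      obtain ⟨h1, h2, h3⟩ := h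
      exact .cons h1 h2 rfl (by rw [guardMem_iff hpt h1]; ring) (ih h3)

lemma path_unique {M : TFSM S I O} (hdet : TFSMDeterministic M) (hpt : PointIntervals M)
    {s q q' : S} {l l' : List (TTrans S I O)} (h : TrPath M s l q) (h' : TrPath M s l' q')
    (hl : l.map lbl = l'.map lbl) : l = l' ∧ q = q' := by
  induction l generalizing s l' with
  | nil =>
    obtain rfl : l' = [] := by simpa using hl.symm
    exact ⟨rfl, h.symm.trans h'⟩
  | cons tr l ih =>
    cases l' with
    | nil => simp at hl
    | cons tr' l' =>
      obtain ⟨h1, h2, h3⟩ := h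
      obtain ⟨h1', h2', h3'⟩ := h'
      simp only [List.map_cons, List.cons.injEq, lbl, Prod.mk.injEq] at hl
      obtain ⟨⟨hi, hlo⟩, hl⟩ := hl
      obtain rfl : tr = tr' := by
        by_contra hne
        refine hdet tr h1 tr' h1' (h2.trans h2'.symm) hi hne tr.guard.lo ⟨?_, ?_⟩
        · rw [guardMem_iff hpt h1]
        · rw [guardMem_iff hpt h1', hlo]
      obtain ⟨rfl, rfl⟩ := ih h3 h3' hl
      exact ⟨rfl, rfl⟩

/-! ### Timed outputs in terms of relative outputs -/

lemma rawOutputs_timed (t0 : ℝ) (l : List (TTrans S I O)) :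
    (rawOutputs (timed t0 (l.map lbl)) l : Multiset (O × ℝ)) =
      (relOut l).map fun p => (p.1, t0 + dur (l.map lbl) + p.2) := by
  induction l generalizing t0 with
  | nil => simp [rawOutputs, timed, relOut]
  | cons tr l ih =>
    have := ih (t0 + tr.guard.lo)
    simp only [rawOutputs] at this
    simp only [rawOutputs, timed, relOut, List.map_cons, lbl, List.zipWith_cons_cons,
      ← Multiset.cons_coe, Multiset.map_cons]
    refine congrArg₂ _ ?_ (this.trans ?_)
    · simp only [dur_cons, Prod.mk.injEq, true_and]
      push_cast
      ring
    · simp only [dur_cons, Nat.cast_add, add_assoc]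

/-- Two states with runs on the same timed word have the same timed outputs exactly when the
relative outputs along their paths agree. -/
lemma timedOut_eq_iff {M : TFSM S I O} (hdet : TFSMDeterministic M) (hpt : PointIntervals M)
    {w : List (I × ℕ)} {s1 s2 q1 q2 : S} {l1 l2 : List (TTrans S I O)}
    (h1 : TrPath M s1 l1 q1) (hw1 : l1.map lbl = w) (h2 : TrPath M s2 l2 q2) (hw2 : l2.map lbl = w) :
    timedOut M s1 (timed 0 w) = timedOut M s2 (timed 0 w) ↔ relOut l1 = relOut l2 := by
  have key : ∀ {s q : S} {l : List (TTrans S I O)}, TrPath M s l q → l.map lbl = w →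
      timedOut M s (timed 0 w) = { β | List.Perm β (rawOutputs (timed 0 w) l) ∧
        List.IsChain (· ≤ ·) (β.map Prod.snd) } := by
    intro s q l h hw
    ext β
    constructor
    · rintro ⟨l', q', hr, hp, hc⟩
      rw [runTo_iff hpt] at hr
      obtain ⟨rfl, -⟩ := path_unique hdet hpt h hr.1 (hw.trans (timed_injective 0 hr.2))
      exact ⟨hp, hc⟩
    · rintro ⟨hp, hc⟩
      exact ⟨l, q, (runTo_iff hpt).2 ⟨h, by rw [hw]⟩, hp, hc⟩
  have hinj : Function.Injective
      (fun p : O × ℤ => ((p.1, (0 : ℝ) + dur w + p.2) : O × ℝ)) := by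
    rintro ⟨a, b⟩ ⟨a', b'⟩ h
    simpa using h
  rw [key h1 hw1, key h2 hw2, ← (Multiset.map_injective hinj).eq_iff]
  have e1 := rawOutputs_timed 0 l1
  have e2 := rawOutputs_timed 0 l2
  rw [hw1] at e1
  rw [hw2] at e2
  rw [← e1, ← e2, Multiset.coe_eq_coe]
  constructor
  · intro h
    -- sorting the outputs of the first run by time gives an element of the first set
    have hp := List.perm_insertionSort (fun a b : O × ℝ => a.2 ≤ b.2)
      (rawOutputs (timed 0 w) l1)
    have hs : (List.insertionSort (fun a b : O × ℝ => a.2 ≤ b.2)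
        (rawOutputs (timed 0 w) l1)).Pairwise (fun a b => a.2 ≤ b.2) := by
      have : Std.Total (fun a b : O × ℝ => a.2 ≤ b.2) := ⟨fun a b => le_total _ _⟩
      have : IsTrans (O × ℝ) (fun a b : O × ℝ => a.2 ≤ b.2) := ⟨fun a b c => le_trans⟩
      exact List.pairwise_insertionSort _ _
    have hmem := h.subset ⟨hp, (List.pairwise_map.2 hs).isChain⟩
    exact hp.symm.trans hmem.1
  · intro h
    ext β
    exact and_congr_left fun _ => ⟨fun h' => h'.trans h, fun h' => h'.trans h.symm⟩

lemma THoming.exists_word {M : TFSM S I O} [Nonempty S] (hdet : TFSMDeterministic M)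
    (hpt : PointIntervals M) {α : List (I × ℝ)} (h : THoming M α) : ∃ w, WordHoming M w := by
  -- comparing a state with itself shows that `α` is defined there
  have hrun : ∀ s, ∃ l q, TrPath M s l q ∧ α = timed 0 (l.map lbl) := by
    intro s
    obtain ⟨q, ⟨l, hl⟩, -⟩ := h.2 s s rfl
    exact ⟨l, q, (runTo_iff hpt).1 hl⟩
  choose trs fin hpath hα using hrun
  have s0 := Classical.arbitrary S
  have hw : ∀ s, (trs s).map lbl = (trs s0).map lbl := fun s =>
    timed_injective 0 ((hα s).symm.trans (hα s0))
  refine ⟨(trs s0).map lbl, trs, fin, fun s => ⟨hpath s, hw s⟩, fun s1 s2 he => ?_⟩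
  have ho := (timedOut_eq_iff hdet hpt (hpath s1) (hw s1) (hpath s2) (hw s2)).2 he
  rw [← hα s0] at ho
  obtain ⟨q, ⟨l1, h1⟩, ⟨l2, h2⟩⟩ := h.2 s1 s2 ho
  rw [runTo_iff hpt] at h1 h2
  rw [(path_unique hdet hpt (hpath s1) h1.1 (timed_injective 0 ((hα s1).symm.trans h1.2))).2,
    (path_unique hdet hpt (hpath s2) h2.1 (timed_injective 0 ((hα s2).symm.trans h2.2))).2]

lemma WordHoming.tHoming {M : TFSM S I O} (hdet : TFSMDeterministic M)
    (hpt : PointIntervals M) {w : List (I × ℕ)} (h : WordHoming M w) :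
    THoming M (timed 0 w) := by
  obtain ⟨trs, fin, hp, hh⟩ := h
  have hr : ∀ s, TReaches M s (timed 0 w) (fin s) := fun s =>
    ⟨trs s, (runTo_iff hpt).2 ⟨(hp s).1, by rw [(hp s).2]⟩⟩
  refine ⟨timed_isTimedInputSeq w, fun s1 s2 he => ⟨fin s1, hr s1, ?_⟩⟩
  rw [hh s1 s2 ((timedOut_eq_iff hdet hpt (hp s1).1 (hp s1).2 (hp s2).1 (hp s2).2).1 he)]
  exact hr s2

/-! ### Emitted and pending outputs -/

/-- Outputs produced no later than the end of the path. -/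
def emitted (l : List (TTrans S I O)) : Multiset (O × ℤ) := (relOut l).filter fun p => p.2 ≤ 0

/-- Outputs produced strictly after the end of the path. The strict inequality makes outputs due
exactly at the end count as emitted, so that at most `K` outputs are pending. -/
def pending (l : List (TTrans S I O)) : Multiset (O × ℤ) := (relOut l).filter fun p => ¬ p.2 ≤ 0

lemma emitted_add_pending (l : List (TTrans S I O)) : emitted l + pending l = relOut l :=
  Multiset.filter_add_not _ _

lemma shift_shift (c d : ℤ) (m : Multiset (O × ℤ)) : shift c (shift d m) = shift (d + c) m := by
  simp [shift, Multiset.map_map, add_assoc]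

lemma shift_zero (m : Multiset (O × ℤ)) : shift 0 m = m := by simp [shift]

lemma shift_add (c : ℤ) (m m' : Multiset (O × ℤ)) :
    shift c (m + m') = shift c m + shift c m' := by simp [shift]

lemma relOut_append (a b : List (TTrans S I O)) :
    relOut (a ++ b) = shift (-(dur (b.map lbl) : ℤ)) (relOut a) + relOut b := by
  induction a with
  | nil => simp [relOut, shift]
  | cons tr a ih =>
    simp only [List.cons_append, relOut, ih, shift, Multiset.map_cons, Multiset.cons_add]
    congr 2
    simp [dur]; ring

/-- The outputs along `a ++ c`, measured from the end of `a`. -/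
lemma shift_relOut_append (a c : List (TTrans S I O)) :
    shift (dur (c.map lbl)) (relOut (a ++ c)) =
      relOut a + shift (dur (c.map lbl)) (relOut c) := by
  rw [relOut_append, shift_add, shift_shift, neg_add_cancel, shift_zero]

/-- Outputs along a path come strictly after its start, since delays are positive. -/
lemma pos_of_mem_shift (c : List (TTrans S I O)) :
    ∀ p ∈ shift (dur (c.map lbl)) (relOut c), ¬ p.2 ≤ 0 := by
  induction c with
  | nil => simp [relOut, shift]
  | cons tr c ih =>
    intro p hp
    have hd : dur ((tr :: c).map lbl) = tr.guard.lo + dur (c.map lbl) := by simp [dur, lbl]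
    have hpos := tr.delay.pos
    simp only [shift, relOut, Multiset.map_cons, Multiset.mem_cons, Multiset.mem_map] at hp ih
    rw [hd] at hp
    rcases hp with rfl | ⟨x, hx, rfl⟩
    · push_cast; omega
    · have := ih _ ⟨x, hx, rfl⟩
      push_cast at this ⊢
      omega

lemma snd_le_of_mem_relOut {m : ℕ} {l : List (TTrans S I O)}
    (hl : ∀ tr ∈ l, (tr.delay : ℕ) ≤ m) : ∀ p ∈ relOut l, p.2 ≤ m := by
  induction l with
  | nil => simp [relOut]
  | cons tr l ih =>
    intro p hp
    simp only [relOut, Multiset.mem_cons] at hp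
    rcases hp with rfl | hp
    · have := hl tr (by simp)
      push_cast; omega
    · exact ih (fun tr h => hl tr (by simp [h])) p hp

/-- Only the most recent transitions have pending outputs, as soon as they last longer than every
delay. -/
lemma pending_append {m : ℕ} {p w : List (TTrans S I O)} (hp : ∀ tr ∈ p, (tr.delay : ℕ) ≤ m)
    (hw : m ≤ dur (w.map lbl)) : pending (p ++ w) = pending w := by
  rw [pending, relOut_append, Multiset.filter_add]
  have : (shift (-(dur (w.map lbl) : ℤ)) (relOut p)).filter (fun p => ¬ p.2 ≤ 0) = 0 := by
    rw [Multiset.filter_eq_nil]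
    intro x hx
    obtain ⟨y, hy, rfl⟩ := Multiset.mem_map.1 hx
    have := snd_le_of_mem_relOut hp y hy
    simp only [not_not]
    omega
  rw [this, zero_add, pending]

lemma mul_le_dur {u : ℕ} {l : List (TTrans S I O)} (hl : ∀ tr ∈ l, u ≤ tr.guard.lo) :
    l.length * u ≤ dur (l.map lbl) := by
  induction l with
  | nil => simp
  | cons tr l ih =>
    have h1 := hl tr (by simp)
    have h2 := ih fun tr h => hl tr (by simp [h])
    simp only [dur, lbl, List.map_cons, List.sum_cons, List.length_cons] at h2 ⊢
    linarith

lemma relOut_congr {l l' : List (TTrans S I O)}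
    (h : l.map (fun tr => (tr.out, tr.delay, tr.guard.lo)) =
      l'.map (fun tr => (tr.out, tr.delay, tr.guard.lo))) :
    relOut l = relOut l' ∧ dur (l.map lbl) = dur (l'.map lbl) := by
  induction l generalizing l' with
  | nil =>
    obtain rfl : l' = [] := by simpa using h.symm
    exact ⟨rfl, rfl⟩
  | cons tr l ih =>
    cases l' with
    | nil => simp at h
    | cons tr' l' =>
      simp only [List.map_cons, List.cons.injEq, Prod.mk.injEq] at h
      obtain ⟨⟨h1, h2, h3⟩, h⟩ := h
      obtain ⟨e1, e2⟩ := ih h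
      refine ⟨by simp only [relOut, h1, h2, e1, e2], ?_⟩
      simp only [dur, lbl, List.map_cons, List.sum_cons, h3] at e2 ⊢
      rw [e2]

/-! ### Deleting a factor -/

/-- If after the prefixes of lengths `j` and `k` the current states, the pending outputs and the
relation "same emitted outputs" agree, the factor between positions `j` and `k` can be deleted. -/
lemma WordHoming.cut {M : TFSM S I O} {w : List (I × ℕ)} {trs : S → List (TTrans S I O)}
    {fin : S → S} (hp : ∀ s, TrPath M s (trs s) (fin s) ∧ (trs s).map lbl = w)
    (hh : ∀ s1 s2, relOut (trs s1) = relOut (trs s2) → fin s1 = fin s2)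
    {j k : ℕ} {Q : S → S}
    (hj : ∀ s, TrPath M s ((trs s).take j) (Q s))
    (hk : ∀ s, TrPath M (Q s) ((trs s).drop k) (fin s))
    (hpend : ∀ s, pending ((trs s).take j) = pending ((trs s).take k))
    (hem : ∀ s1 s2, emitted ((trs s1).take j) = emitted ((trs s2).take j) →
      emitted ((trs s1).take k) = emitted ((trs s2).take k)) :
    WordHoming M (w.take j ++ w.drop k) := by
  refine ⟨fun s => (trs s).take j ++ (trs s).drop k, fin, fun s =>
    ⟨path_append.2 ⟨Q s, hj s, hk s⟩, by simp [← (hp s).2]⟩, fun s1 s2 he => hh s1 s2 ?_⟩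
  have hdur : ∀ s, dur (((trs s).drop k).map lbl) = dur (w.drop k) := fun s => by
    rw [List.map_drop, (hp s).2]
  have hsplit : ∀ s (a : List (TTrans S I O)), shift (dur (w.drop k)) (relOut (a ++ (trs s).drop k)) =
      emitted a + (pending a + shift (dur (w.drop k)) (relOut ((trs s).drop k))) := by
    intro s a
    rw [← hdur s, shift_relOut_append, ← add_assoc, emitted_add_pending]
  have hpos : ∀ s, ∀ p ∈ shift (dur (w.drop k)) (relOut ((trs s).drop k)), ¬ p.2 ≤ 0 := by
    intro s
    rw [← hdur s]
    exact pos_of_mem_shift _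
  -- the emitted part and the rest are recovered from the total by filtering on the sign of time
  have hfil : ∀ s (a : List (TTrans S I O)),
      (emitted a + (pending a + shift (dur (w.drop k)) (relOut ((trs s).drop k)))).filter
        (fun p => p.2 ≤ 0) = emitted a ∧
      (emitted a + (pending a + shift (dur (w.drop k)) (relOut ((trs s).drop k)))).filter
        (fun p => ¬ p.2 ≤ 0) =
          pending a + shift (dur (w.drop k)) (relOut ((trs s).drop k)) := by
    intro s a
    have hE : ∀ p ∈ emitted a, p.2 ≤ 0 := fun p h => (Multiset.mem_filter.1 h).2
    have hP : ∀ p ∈ pending a, ¬ p.2 ≤ 0 := fun p h => (Multiset.mem_filter.1 h).2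
    have hR : ∀ p ∈ pending a + shift (dur (w.drop k)) (relOut ((trs s).drop k)),
        ¬ p.2 ≤ 0 := fun p h => (Multiset.mem_add.1 h).elim (hP p) (hpos s p)
    constructor
    · rw [Multiset.filter_add, Multiset.filter_eq_self.2 hE, Multiset.filter_eq_nil.2 hR,
        add_zero]
    · rw [Multiset.filter_add, Multiset.filter_eq_self.2 hR,
        Multiset.filter_eq_nil.2 (fun p h => not_not.2 (hE p h)), zero_add]
  have he' := congrArg (shift (dur (w.drop k) : ℤ)) he
  simp only [hsplit] at he'
  have hE := congrArg (Multiset.filter fun p => p.2 ≤ 0) he'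
  have hR := congrArg (Multiset.filter fun p => ¬ p.2 ≤ 0) he'
  rw [(hfil _ _).1, (hfil _ _).1] at hE
  rw [(hfil _ _).2, (hfil _ _).2, hpend, hpend] at hR
  have hE' := hem s1 s2 hE
  have hfull : shift (dur (w.drop k)) (relOut ((trs s1).take k ++ (trs s1).drop k)) =
      shift (dur (w.drop k)) (relOut ((trs s2).take k ++ (trs s2).drop k)) := by
    rw [hsplit, hsplit, hE', hR]
  rw [List.take_append_drop, List.take_append_drop] at hfull
  have := congrArg (shift (-(dur (w.drop k) : ℤ))) hfull
  simpa [shift_shift, shift_zero] using this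

/-- A homing word of length at least `K` plus the bound on the number of configurations can be
shortened: two of its prefixes of length at least `K` have the same configuration. -/
lemma WordHoming.shorten [Fintype S] [Fintype O] {M : TFSM S I O}
    {Gset Dset : Finset ℕ} (hG : Gset.Nonempty) (hD : Dset.Nonempty)
    (hGmem : ∀ tr ∈ M, tr.guard.lo ∈ Gset) (hDmem : ∀ tr ∈ M, (tr.delay : ℕ) ∈ Dset)
    {K : ℕ} (hK : Dset.max' hD ≤ K * Gset.min' hG) {w : List (I × ℕ)} (hw : WordHoming M w)
    (hlen : K + (Fintype.card S * (Fintype.card O * Dset.card * Gset.card) ^ K) ^ Fintype.card S *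
      2 ^ (Fintype.card S * Fintype.card S) ≤ w.length) :
    ∃ w', WordHoming M w' ∧ w'.length < w.length := by
  classical
  obtain ⟨trs, fin, hp, hh⟩ := hw
  have hmid : ∀ k s, ∃ q, TrPath M s ((trs s).take k) q ∧ TrPath M q ((trs s).drop k) (fin s) := by
    intro k s
    rw [← path_append, List.take_append_drop]
    exact (hp s).1
  choose Q hQ1 hQ2 using hmid
  have hlen' : ∀ s, (trs s).length = w.length := fun s => by
    rw [← (hp s).2, List.length_map]
  set B := (Fintype.card S * (Fintype.card O * Dset.card * Gset.card) ^ K) ^ Fintype.card S *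
      2 ^ (Fintype.card S * Fintype.card S) with hB
  -- the arbitrary values outside `Dset` and `Gset` are never attained on transitions of `M`
  let toD : ℕ → Dset := fun d => if h : d ∈ Dset then ⟨d, h⟩ else ⟨_, hD.choose_spec⟩
  let toG : ℕ → Gset := fun d => if h : d ∈ Gset then ⟨d, h⟩ else ⟨_, hG.choose_spec⟩
  let e : TTrans S I O → O × Dset × Gset := fun tr => (tr.out, toD tr.delay, toG tr.guard.lo)
  let win : ℕ → S → List (TTrans S I O) := fun k s => ((trs s).take (K + k)).drop k
  have hwin : ∀ (k : Fin (B + 1)) s, ((win k s).map e).length = K := by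
    intro k s
    have := k.2
    simp only [win, List.length_map, List.length_drop, List.length_take, hlen']
    omega
  let code : Fin (B + 1) →
      (S → S × List.Vector (O × Dset × Gset) K) × (S → S → Prop) := fun k =>
    (fun s => (Q (K + k) s, ⟨(win k s).map e, hwin k s⟩),
      fun s1 s2 => emitted ((trs s1).take (K + k)) = emitted ((trs s2).take (K + k)))
  have hcard : Fintype.card ((S → S × List.Vector (O × Dset × Gset) K) × (S → S → Prop)) <
      Fintype.card (Fin (B + 1)) := by
    have : Fintype.card ((S → S × List.Vector (O × Dset × Gset) K) × (S → S → Prop)) = B := by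
      simp only [Fintype.card_prod, Fintype.card_fun, card_vector, Fintype.card_coe,
        Fintype.card_prop, hB, mul_assoc, pow_mul]
    rw [this]
    simp
  have hsub : ∀ k s, ∀ tr ∈ win k s, tr ∈ M := fun k s tr h =>
    (hp s).1.mem tr (List.mem_of_mem_take (List.mem_of_mem_drop h))
  have hpend : ∀ (k : Fin (B + 1)) s,
      pending ((trs s).take (K + k)) = pending (win k s) := by
    intro k s
    rw [← List.take_append_drop (k : ℕ) ((trs s).take (K + k))]
    refine pending_append (m := Dset.max' hD) (fun tr h => ?_) ?_
    · exact Dset.le_max' _ (hDmem tr ((hp s).1.mem tr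
        (List.mem_of_mem_take (List.mem_of_mem_take h))))
    · have h1 := mul_le_dur (u := Gset.min' hG) (l := win k s) fun tr h =>
        Gset.min'_le _ (hGmem tr (hsub k s tr h))
      have h2 := hwin k s
      rw [List.length_map] at h2
      rw [h2] at h1
      exact hK.trans h1
  have hdec : ∀ l l' : List (TTrans S I O), (∀ tr ∈ l, tr ∈ M) → (∀ tr ∈ l', tr ∈ M) →
      l.map e = l'.map e → relOut l = relOut l' := by
    intro l l' hl hl' h
    have hf : ∀ l : List (TTrans S I O), (∀ tr ∈ l, tr ∈ M) →
        (l.map fun tr => (tr.out, (tr.delay : ℕ), tr.guard.lo)) =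
          (l.map e).map fun x => (x.1, (x.2.1 : ℕ), (x.2.2 : ℕ)) := by
      intro l hl
      rw [List.map_map]
      refine List.map_congr_left fun tr h => ?_
      simp [e, toD, toG, hDmem tr (hl tr h), hGmem tr (hl tr h)]
    refine (relOut_congr ?_).1
    have h3 := (hf l hl).trans ((congrArg _ h).trans (hf l' hl').symm)
    have hinj : Function.Injective
        (fun x : O × ℕ+ × ℕ => (x.1, (x.2.1 : ℕ), x.2.2)) := by
      rintro ⟨a, b, c⟩ ⟨a', b', c'⟩ h
      simpa using h
    apply List.map_injective_iff.2 hinj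
    simpa [List.map_map, Function.comp_def] using h3
  have main : ∀ j k : Fin (B + 1), j < k → code j = code k →
      ∃ w', WordHoming M w' ∧ w'.length < w.length := by
    intro j k hjk he
    simp only [code, Prod.mk.injEq] at he
    obtain ⟨he1, he2⟩ := he
    have hq : ∀ s, Q (K + j) s = Q (K + k) s := fun s => congrArg Prod.fst (congrFun he1 s)
    have hv : ∀ s, (win j s).map e = (win k s).map e := fun s =>
      congrArg Subtype.val (congrArg Prod.snd (congrFun he1 s))
    refine ⟨_, WordHoming.cut hp hh (j := K + j) (k := K + k) (Q := Q (K + j)) (hQ1 _)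
      (fun s => hq s ▸ hQ2 _ s) (fun s => ?_) (fun s1 s2 => ?_), ?_⟩
    · rw [hpend, hpend, pending, pending, hdec _ _ (hsub j s) (hsub k s) (hv s)]
    · exact (congrFun (congrFun he2 s1) s2).mp
    · have := k.2
      have : (j : ℕ) < k := hjk
      simp only [List.length_append, List.length_take, List.length_drop]
      omega
  obtain ⟨j, k, hne, he⟩ := Fintype.exists_ne_map_eq_of_card_lt code hcard
  rcases lt_or_gt_of_ne hne with h | h
  · exact main j k h he
  · exact main k j h he.symm

/-! ### The numerical estimate -/

/-- The right-hand side is the bound of the theorem, with `T = n * (1 + ∑ N ^ j)`; it exceeds the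
number of configurations because `T ≥ n + X` for `X = n * N ^ K ≥ n`, and `X ≤ 2 ^ (X - 1)`. -/
lemma config_bound {n N K : ℕ} (hn : 1 ≤ n) (hN : 1 ≤ N) (hK : 1 ≤ K) :
    K + (n * N ^ K) ^ n * 2 ^ (n * n) ≤
      2 ^ ((n * (1 + ∑ j ∈ Finset.Icc 1 K, N ^ j)) *
        (n * (1 + ∑ j ∈ Finset.Icc 1 K, N ^ j) - 1) / 2 + 1) := by
  set P := ∑ j ∈ Finset.Icc 1 K, N ^ j with hS
  have h1 : N ^ K ≤ P :=
    Finset.single_le_sum (f := fun j => N ^ j) (fun _ _ => Nat.zero_le _) (by simp [hK])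
  have h2 : K ≤ P := by
    have : ∑ j ∈ Finset.Icc 1 K, 1 ≤ P := Finset.sum_le_sum fun j _ => Nat.one_le_pow _ _ hN
    simpa using this
  have hNK : 1 ≤ N ^ K := Nat.one_le_pow _ _ hN
  obtain ⟨x, hx⟩ : ∃ x, n * N ^ K = x + 1 := ⟨n * N ^ K - 1, by
    have := Nat.mul_le_mul hn hNK
    omega⟩
  have hxn : n ≤ x + 1 := hx ▸ Nat.le_mul_of_pos_right n hNK
  obtain ⟨z, hz⟩ : ∃ z, n * (1 + P) = n + (x + 1) + z :=
    Nat.exists_eq_add_of_le (by rw [← hx]; nlinarith)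
  have hKT : K ≤ n + x + z := by
    have : 1 * (1 + P) ≤ n * (1 + P) := Nat.mul_le_mul_right _ hn
    omega
  rw [hx, hz]
  have hsub : n + (x + 1) + z - 1 = n + x + z := by omega
  rw [hsub]
  set E := (n + (x + 1) + z) * (n + x + z) / 2 with hE
  have e1 : x * n + n * n ≤ E := by
    rw [hE, Nat.le_div_iff_mul_le (by norm_num)]
    obtain ⟨n, rfl⟩ : ∃ m, n = m + 1 := ⟨n - 1, by omega⟩
    have : n ≤ x := by omega
    nlinarith [Nat.mul_le_mul this this, Nat.zero_le (z * n), Nat.zero_le (z * x),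
      Nat.zero_le (z * z)]
  have e2 : K ≤ E := by
    rw [hE, Nat.le_div_iff_mul_le (by norm_num)]
    nlinarith [Nat.zero_le ((x + z) * (n + x + z))]
  have e3 : (x + 1) ^ n * 2 ^ (n * n) ≤ 2 ^ E := calc
    (x + 1) ^ n * 2 ^ (n * n) ≤ (2 ^ x) ^ n * 2 ^ (n * n) :=
      Nat.mul_le_mul_right _ (Nat.pow_le_pow_left Nat.lt_two_pow_self n)
    _ = 2 ^ (x * n + n * n) := by rw [pow_add, ← pow_mul]
    _ ≤ 2 ^ E := Nat.pow_le_pow_right (by norm_num) e1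
  have e4 : K ≤ 2 ^ E := e2.trans Nat.lt_two_pow_self.le
  rw [pow_succ]
  omega

/-- a (possibly partial) deterministic TFSM with only point intervals that
has a homing sequence has one of length at most `2 ^ (T(T−1)/2 + 1)`, where
`T = |S|·(1 + Σ_{j=1}^{K} N^j)`, `N = |O|·|D|·|G|`, `K = ⌈max(D)/min(G)⌉`. -/
theorem stmt19 {S I O : Type} [Fintype S] [Nonempty S] [Fintype I] [Nonempty I]
    [Fintype O] [Nonempty O]
    (M : TFSM S I O) (hfin : Set.Finite M) (hdet : TFSMDeterministic M)
    (hpt : PointIntervals M)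
    (Gset : Finset ℕ) (hG : Gset.Nonempty) (hGpos : ∀ u ∈ Gset, 0 < u)
    (hGmem : ∀ tr ∈ M, tr.guard.lo ∈ Gset)
    (Dset : Finset ℕ) (hD : Dset.Nonempty) (hDpos : ∀ d ∈ Dset, 0 < d)
    (hDmem : ∀ tr ∈ M, (tr.delay : ℕ) ∈ Dset)
    (hex : ∃ α : List (I × ℝ), THoming M α) :
    ∃ α : List (I × ℝ), THoming M α ∧
      α.length ≤ hsBound (Fintype.card S) (Fintype.card O) Gset Dset hG hD := by
  obtain ⟨α, hα⟩ := hex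
  have hne : ∃ L, ∃ w, WordHoming M w ∧ w.length = L :=
    let ⟨w, hw⟩ := hα.exists_word hdet hpt
    ⟨_, w, hw, rfl⟩
  classical
  -- `w` is a shortest homing word
  obtain ⟨w, hw, hwlen⟩ := Nat.find_spec hne
  refine ⟨timed 0 w, hw.tHoming hdet hpt, ?_⟩
  rw [timed_length]
  have hg : 0 < Gset.min' hG := hGpos _ (Gset.min'_mem hG)
  have hd : 0 < Dset.max' hD := hDpos _ (Dset.max'_mem hD)
  have hgQ : (0 : ℚ) < (Gset.min' hG : ℚ) := by exact_mod_cast hg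
  have hdQ : (0 : ℚ) < (Dset.max' hD : ℚ) := by exact_mod_cast hd
  set K : ℕ := ⌈((Dset.max' hD : ℚ)) / ((Gset.min' hG : ℚ))⌉₊ with hKdef
  have hK1 : 1 ≤ K := Nat.ceil_pos.2 (div_pos hdQ hgQ)
  have hK : Dset.max' hD ≤ K * Gset.min' hG := by
    have h := (div_le_iff₀ hgQ).1 (Nat.le_ceil ((Dset.max' hD : ℚ) / (Gset.min' hG : ℚ)))
    exact_mod_cast h
  have hN : 1 ≤ Fintype.card O * Dset.card * Gset.card :=
    Nat.mul_pos (Nat.mul_pos Fintype.card_pos hD.card_pos) hG.card_pos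
  refine le_trans ?_ (config_bound (n := Fintype.card S) Fintype.card_pos hN hK1)
  by_contra! hlt
  obtain ⟨w', hw', hlt'⟩ := hw.shorten hG hD hGmem hDmem hK hlt.le
  exact Nat.find_min hne (hwlen ▸ hlt') ⟨w', hw', rfl⟩
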